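/- Let μ, ν, μ₁, μ₂, ν₁, ν₂ be Borel measures on ℝ^d with finite mass and finite first moment. Then the generalized Wasserstein distance W₁^{1,1} satisfies: (i) W₁^{1,1}(kμ, kν) ≤ k·W₁^{1,1}(μ, ν) for every k ≥ 0; and (ii) W₁^{1,1}(μ₁ + μ₂, ν₁ + ν₂) ≤ W₁^{1,1}(μ₁, ν₁) + W₁^{1,1}(μ₂, ν₂). -/

import Mathlib

/-!
Admissible data scale and add. If `π` is a transference plan for `(μ', ν')` then `k • π` is one
for `(k • μ', k • ν')` at `k` times the cost, and the sum of plans for `(μ₁', ν₁')` and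
`(μ₂', ν₂')` is a plan for the sums at the sum of the costs; likewise dominated submeasures of
equal mass scale and add. Taking infima gives both claims, first for `W1` and then for `genW1`.

Two facts make the real infima and Bochner integrals behave as expected: the set of plans
between finite measures of equal mass is nonempty, since the normalized product is such a plan
(`exists_plan`), and the cost is integrable against any plan whose marginals have finite first
moment (`integrable_dist_of_plan`).
-/

open MeasureTheory Filter Metric

noncomputable section

/-- The classical 1-Wasserstein "distance" between two Borel measures of equal mass,
defined as the infimum of transport costs over transference plans. -/
def W1 {E : Type*} [MeasurableSpace E] [PseudoMetricSpace E] (μ ν : Measure E) : ℝ :=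
  sInf {r : ℝ | ∃ π : Measure (E × E),
    π.map Prod.fst = μ ∧ π.map Prod.snd = ν ∧ r = ∫ p, dist p.1 p.2 ∂π}

/-- The generalized Wasserstein distance `W₁^{1,1}` of Piccoli–Rossi. -/
def genW1 {E : Type*} [MeasurableSpace E] [PseudoMetricSpace E] (μ ν : Measure E) : ℝ :=
  sInf {r : ℝ | ∃ μ' ν' : Measure E, μ' ≤ μ ∧ ν' ≤ ν ∧ μ' Set.univ = ν' Set.univ ∧
    r = ((μ Set.univ).toReal - (μ' Set.univ).toReal)
      + ((ν Set.univ).toReal - (ν' Set.univ).toReal) + W1 μ' ν'}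

lemma le_sInf_add_sInf {S T : Set ℝ} (hS : S.Nonempty) (hT : T.Nonempty) {c : ℝ}
    (h : ∀ s ∈ S, ∀ t ∈ T, c ≤ s + t) : c ≤ sInf S + sInf T := by
  have h1 : ∀ t ∈ T, c - t ≤ sInf S := fun t ht =>
    le_csInf hS fun s hs => by linarith [h s hs t ht]
  have h2 : c - sInf S ≤ sInf T := le_csInf hT fun t ht => by linarith [h1 t ht]
  linarith

lemma le_mul_sInf {S : Set ℝ} (hS : S.Nonempty) {c k : ℝ} (hk : 0 ≤ k)
    (h : ∀ s ∈ S, c ≤ k * s) : c ≤ k * sInf S := by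
  rw [← smul_eq_mul, ← Real.sInf_smul_of_nonneg hk]
  refine le_csInf hS.smul_set ?_
  rintro _ ⟨s, hs, rfl⟩
  exact h s hs

section Plans

variable {E : Type*} [MeasurableSpace E] [PseudoMetricSpace E]

lemma W1_nonneg (μ ν : Measure E) : 0 ≤ W1 μ ν := by
  refine Real.sInf_nonneg ?_
  rintro _ ⟨π, -, -, rfl⟩
  exact integral_nonneg fun _ => dist_nonneg

lemma W1_le_of_plan {μ ν : Measure E} (π : Measure (E × E))
    (h1 : π.map Prod.fst = μ) (h2 : π.map Prod.snd = ν) :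
    W1 μ ν ≤ ∫ p, dist p.1 p.2 ∂π := by
  refine csInf_le ⟨0, ?_⟩ ⟨π, h1, h2, rfl⟩
  rintro _ ⟨π, -, -, rfl⟩
  exact integral_nonneg fun _ => dist_nonneg

/-- Finite measures of equal mass `m` admit the transference plan `m⁻¹ • μ.prod ν`. -/
lemma exists_plan (μ ν : Measure E) [IsFiniteMeasure μ] [IsFiniteMeasure ν]
    (h : μ Set.univ = ν Set.univ) :
    {r : ℝ | ∃ π : Measure (E × E), π.map Prod.fst = μ ∧ π.map Prod.snd = ν ∧
      r = ∫ p, dist p.1 p.2 ∂π}.Nonempty := by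
  by_cases h0 : μ Set.univ = 0
  · have hμ : μ = 0 := Measure.measure_univ_eq_zero.1 h0
    have hν : ν = 0 := Measure.measure_univ_eq_zero.1 (h ▸ h0)
    exact ⟨_, 0, by simp [hμ], by simp [hν], rfl⟩
  · refine ⟨_, (μ Set.univ)⁻¹ • μ.prod ν, ?_, ?_, rfl⟩
    · rw [Measure.map_smul, Measure.map_fst_prod, smul_smul, ← h,
        ENNReal.inv_mul_cancel h0 (measure_ne_top _ _), one_smul]
    · rw [Measure.map_smul, Measure.map_snd_prod, smul_smul,
        ENNReal.inv_mul_cancel h0 (measure_ne_top _ _), one_smul]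

lemma W1_smul_le (μ ν : Measure E) [IsFiniteMeasure μ] [IsFiniteMeasure ν]
    (h : μ Set.univ = ν Set.univ) {k : ℝ} (hk : 0 ≤ k) :
    W1 (ENNReal.ofReal k • μ) (ENNReal.ofReal k • ν) ≤ k * W1 μ ν := by
  refine le_mul_sInf (exists_plan μ ν h) hk ?_
  rintro _ ⟨π, h1, h2, rfl⟩
  refine (W1_le_of_plan (ENNReal.ofReal k • π) ?_ ?_).trans_eq ?_
  · rw [Measure.map_smul, h1]
  · rw [Measure.map_smul, h2]
  · rw [integral_smul_measure, ENNReal.toReal_ofReal hk, smul_eq_mul]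

lemma genW1_le {μ ν μ' ν' : Measure E} [IsFiniteMeasure μ] [IsFiniteMeasure ν]
    (h1 : μ' ≤ μ) (h2 : ν' ≤ ν) (h : μ' Set.univ = ν' Set.univ) :
    genW1 μ ν ≤ ((μ Set.univ).toReal - (μ' Set.univ).toReal)
      + ((ν Set.univ).toReal - (ν' Set.univ).toReal) + W1 μ' ν' := by
  refine csInf_le ⟨0, ?_⟩ ⟨μ', ν', h1, h2, h, rfl⟩
  rintro _ ⟨α, β, hα, hβ, -, rfl⟩
  have h3 := ENNReal.toReal_mono (measure_ne_top μ _) (hα Set.univ)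
  have h4 := ENNReal.toReal_mono (measure_ne_top ν _) (hβ Set.univ)
  have h5 := W1_nonneg α β
  linarith

/-- The zero submeasures are always admissible in the definition of `genW1`. -/
lemma genW1_set_nonempty (μ ν : Measure E) :
    {r : ℝ | ∃ μ' ν' : Measure E, μ' ≤ μ ∧ ν' ≤ ν ∧ μ' Set.univ = ν' Set.univ ∧
    r = ((μ Set.univ).toReal - (μ' Set.univ).toReal)
      + ((ν Set.univ).toReal - (ν' Set.univ).toReal) + W1 μ' ν'}.Nonempty :=
  ⟨_, 0, 0, Measure.zero_le μ, Measure.zero_le ν, rfl, rfl⟩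

lemma genW1_smul_le (μ ν : Measure E) [IsFiniteMeasure μ] [IsFiniteMeasure ν]
    {k : ℝ} (hk : 0 ≤ k) :
    genW1 (ENNReal.ofReal k • μ) (ENNReal.ofReal k • ν) ≤ k * genW1 μ ν := by
  refine le_mul_sInf (genW1_set_nonempty μ ν) hk ?_
  rintro _ ⟨μ', ν', h1, h2, h, rfl⟩
  have := isFiniteMeasure_of_le μ h1
  have := isFiniteMeasure_of_le ν h2
  have : IsFiniteMeasure (ENNReal.ofReal k • μ) := Measure.smul_finite μ ENNReal.ofReal_ne_top
  have : IsFiniteMeasure (ENNReal.ofReal k • ν) := Measure.smul_finite ν ENNReal.ofReal_ne_top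
  have hle : ∀ {α β : Measure E}, α ≤ β → ENNReal.ofReal k • α ≤ ENNReal.ofReal k • β :=
    fun hαβ => Measure.le_iff.2 fun s _ => by
      simp only [Measure.smul_apply, smul_eq_mul]
      gcongr
  have hW := W1_smul_le μ' ν' h hk
  have hG := genW1_le (hle h1) (hle h2) (by simp [h])
  simp only [Measure.smul_apply, smul_eq_mul, ENNReal.toReal_mul, ENNReal.toReal_ofReal hk] at hG
  linarith

end Plans

section Normed

variable {E : Type*} [NormedAddCommGroup E] [MeasurableSpace E] [BorelSpace E]
  [SecondCountableTopology E]

lemma integrable_dist_of_plan {μ ν : Measure E} {π : Measure (E × E)}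
    (h1 : π.map Prod.fst = μ) (h2 : π.map Prod.snd = ν)
    (hμ : Integrable (fun x => ‖x‖) μ) (hν : Integrable (fun x => ‖x‖) ν) :
    Integrable (fun p : E × E => dist p.1 p.2) π := by
  subst h1 h2
  have i1 : Integrable (fun p : E × E => ‖p.1‖) π := hμ.comp_measurable measurable_fst
  have i2 : Integrable (fun p : E × E => ‖p.2‖) π := hν.comp_measurable measurable_snd
  refine (i1.add i2).mono' (by fun_prop) (Eventually.of_forall fun p => ?_)
  rw [Real.norm_of_nonneg dist_nonneg]
  exact dist_le_norm_add_norm p.1 p.2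

lemma W1_add_le (μ₁ μ₂ ν₁ ν₂ : Measure E)
    [IsFiniteMeasure μ₁] [IsFiniteMeasure μ₂] [IsFiniteMeasure ν₁] [IsFiniteMeasure ν₂]
    (hμ₁ : Integrable (fun x => ‖x‖) μ₁) (hμ₂ : Integrable (fun x => ‖x‖) μ₂)
    (hν₁ : Integrable (fun x => ‖x‖) ν₁) (hν₂ : Integrable (fun x => ‖x‖) ν₂)
    (h₁ : μ₁ Set.univ = ν₁ Set.univ) (h₂ : μ₂ Set.univ = ν₂ Set.univ) :
    W1 (μ₁ + μ₂) (ν₁ + ν₂) ≤ W1 μ₁ ν₁ + W1 μ₂ ν₂ := by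
  refine le_sInf_add_sInf (exists_plan μ₁ ν₁ h₁) (exists_plan μ₂ ν₂ h₂) ?_
  rintro _ ⟨π, a1, a2, rfl⟩ _ ⟨ρ, b1, b2, rfl⟩
  refine (W1_le_of_plan (π + ρ) ?_ ?_).trans_eq ?_
  · rw [Measure.map_add _ _ measurable_fst, a1, b1]
  · rw [Measure.map_add _ _ measurable_snd, a2, b2]
  · exact integral_add_measure (integrable_dist_of_plan a1 a2 hμ₁ hν₁)
      (integrable_dist_of_plan b1 b2 hμ₂ hν₂)

lemma genW1_add_le (μ₁ μ₂ ν₁ ν₂ : Measure E)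
    [IsFiniteMeasure μ₁] [IsFiniteMeasure μ₂] [IsFiniteMeasure ν₁] [IsFiniteMeasure ν₂]
    (hμ₁ : Integrable (fun x => ‖x‖) μ₁) (hμ₂ : Integrable (fun x => ‖x‖) μ₂)
    (hν₁ : Integrable (fun x => ‖x‖) ν₁) (hν₂ : Integrable (fun x => ‖x‖) ν₂) :
    genW1 (μ₁ + μ₂) (ν₁ + ν₂) ≤ genW1 μ₁ ν₁ + genW1 μ₂ ν₂ := by
  refine le_sInf_add_sInf (genW1_set_nonempty μ₁ ν₁) (genW1_set_nonempty μ₂ ν₂) ?_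
  rintro _ ⟨α₁, β₁, a1, b1, h₁, rfl⟩ _ ⟨α₂, β₂, a2, b2, h₂, rfl⟩
  have := isFiniteMeasure_of_le μ₁ a1
  have := isFiniteMeasure_of_le ν₁ b1
  have := isFiniteMeasure_of_le μ₂ a2
  have := isFiniteMeasure_of_le ν₂ b2
  have hW := W1_add_le α₁ α₂ β₁ β₂ (hμ₁.mono_measure a1) (hμ₂.mono_measure a2)
    (hν₁.mono_measure b1) (hν₂.mono_measure b2) h₁ h₂
  have hG := genW1_le (add_le_add a1 a2) (add_le_add b1 b2) (by simp [h₁, h₂])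
  simp only [Measure.add_apply,
    ENNReal.toReal_add (measure_ne_top _ _) (measure_ne_top _ _)] at hG
  linarith

end Normed

/-- Properties of the generalized Wasserstein distance `W₁^{1,1}`:
positive 1-homogeneity (as an inequality) and subadditivity. -/
theorem genW1_smul_le_and_add_le (d : ℕ)
    (μ ν μ₁ μ₂ ν₁ ν₂ : Measure (EuclideanSpace ℝ (Fin d)))
    [IsFiniteMeasure μ] [IsFiniteMeasure ν] [IsFiniteMeasure μ₁] [IsFiniteMeasure μ₂]
    [IsFiniteMeasure ν₁] [IsFiniteMeasure ν₂]
    (hμ : Integrable (fun x => ‖x‖) μ) (hν : Integrable (fun x => ‖x‖) ν)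
    (hμ₁ : Integrable (fun x => ‖x‖) μ₁) (hμ₂ : Integrable (fun x => ‖x‖) μ₂)
    (hν₁ : Integrable (fun x => ‖x‖) ν₁) (hν₂ : Integrable (fun x => ‖x‖) ν₂) :
    (∀ k : ℝ, 0 ≤ k →
      genW1 (ENNReal.ofReal k • μ) (ENNReal.ofReal k • ν) ≤ k * genW1 μ ν) ∧
    genW1 (μ₁ + μ₂) (ν₁ + ν₂) ≤ genW1 μ₁ ν₁ + genW1 μ₂ ν₂ := by
  exact ⟨fun k hk => genW1_smul_le μ ν hk, genW1_add_le μ₁ μ₂ ν₁ ν₂ hμ₁ hμ₂ hν₁ hν₂⟩
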